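/- Monotone many-party amplification of SSI: if (ε, D^{2^r t}, 2^r n)-SSI holds against 2 parties, then for all 0 ≤ j ≤ r, ((2^{j+1} − 1)·ε, D^{2^{r−j} t}, 2^{r−j} n)-SSI holds against 2^{j+1} parties. Consequently, if (ε, D^{qt}, qn)-SSI holds against 2 parties then (2qε, D^t, n)-SSI holds against q parties. -/

import Mathlib

open Matrix
open scoped ComplexOrder

/-- A density matrix: positive semidefinite with unit trace. -/
def IsDensity {m : Type*} [Fintype m] [DecidableEq m] (ρ : Matrix m m ℂ) : Prop :=
  ρ.PosSemidef ∧ ρ.trace = 1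

/-- A POVM indexed by outcomes in `O`. -/
def IsPOVM {m O : Type*} [Fintype m] [DecidableEq m] [Fintype O]
    (M : O → Matrix m m ℂ) : Prop :=
  (∀ o, (M o).PosSemidef) ∧ ∑ o, M o = 1

/-- The state where all q parties hold t copies of the same sample from the
ensemble {(w i, v i)}: entrywise E_i[ w i · (ψ_i ψ_i†)^{⊗ qt} ]. -/
noncomputable def chiId (q t V : ℕ) {ι : Type*} [Fintype ι]
    (w : ι → ℝ) (v : ι → Fin V → ℂ) :
    Matrix (Fin q → Fin t → Fin V) (Fin q → Fin t → Fin V) ℂ :=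
  Matrix.of fun x x' => ∑ i, (w i : ℂ) * (∏ j, ∏ c, v i (x j c)) *
    (starRingEnd ℂ) (∏ j, ∏ c, v i (x' j c))

/-- The state where the q parties hold t copies of independent samples from the
ensemble {(w i, v i)}. -/
noncomputable def chiInd (q t V : ℕ) {ι : Type*} [Fintype ι]
    (w : ι → ℝ) (v : ι → Fin V → ℂ) :
    Matrix (Fin q → Fin t → Fin V) (Fin q → Fin t → Fin V) ℂ :=
  Matrix.of fun x x' => ∏ j, ∑ i, (w i : ℂ) * (∏ c, v i (x j c)) *
    (starRingEnd ℂ) (∏ c, v i (x' j c))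

/-- Probability that the q-party non-local adversary (entangled state ρ, party
POVMs M j) produces the joint output o on the q-partite input state χ, via
Tr[(⊗_j M_j(o j)) (ρ ⊗ χ)]. -/
noncomputable def qProb (q t n V : ℕ) (k : Fin q → ℕ)
    (ρ : Matrix ((j : Fin q) → Fin (k j)) ((j : Fin q) → Fin (k j)) ℂ)
    (M : (j : Fin q) → (Fin n → Bool) →
      Matrix (Fin (k j) × (Fin t → Fin V)) (Fin (k j) × (Fin t → Fin V)) ℂ)
    (χ : Matrix (Fin q → Fin t → Fin V) (Fin q → Fin t → Fin V) ℂ)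
    (o : Fin q → Fin n → Bool) : ℝ :=
  (∑ e : (j : Fin q) → Fin (k j), ∑ x : Fin q → Fin t → Fin V,
   ∑ e' : (j : Fin q) → Fin (k j), ∑ x' : Fin q → Fin t → Fin V,
     (∏ j, M j (o j) (e j, x j) (e' j, x' j)) * ρ e' e * χ x' x).re

/-- (ε, D^t, n)-simultaneous state indistinguishability against q parties, for the
ensemble D = {(w i, v i)}: every q-party non-local adversary, on any output set S,
distinguishes the identical-sample state from the independent-sample state with
advantage at most ε. -/
def SSIq (ε : ℝ) (q t n V : ℕ) {ι : Type*} [Fintype ι]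
    (w : ι → ℝ) (v : ι → Fin V → ℂ) : Prop :=
  ∀ (k : Fin q → ℕ)
    (ρ : Matrix ((j : Fin q) → Fin (k j)) ((j : Fin q) → Fin (k j)) ℂ)
    (M : (j : Fin q) → (Fin n → Bool) →
      Matrix (Fin (k j) × (Fin t → Fin V)) (Fin (k j) × (Fin t → Fin V)) ℂ),
    IsDensity ρ → (∀ j, IsPOVM (M j)) →
    ∀ S : Finset (Fin q → Fin n → Bool),
      |∑ o ∈ S, (qProb q t n V k ρ M (chiId q t V w v) o -
                 qProb q t n V k ρ M (chiInd q t V w v) o)| ≤ ε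

/-!
Give every party a label and every label an independent sample. One common label is the
identical-sample state, pairwise distinct labels are the independent-sample state. If SSI against
two parties holds for `b * t` copies and `b * n` output bits, then splitting one label class into
two halves of at most `b` parties costs `ε`: each half acts as a super-party, and the remaining
parties hold samples independent of the split one, so their measurement only replaces the shared
state by a post-measurement state. Going from one class to `q` classes takes `q - 1` splits.
-/

open scoped Kronecker

section FibreSplit

variable {J L : Type*} [Fintype J] [DecidableEq J]

lemma image_piecewise_const [DecidableEq L] {A : Finset J} (hA : A.Nonempty) {f : J → L}
    (hf : ∀ j ∈ A, ∃ c ∉ A, f c = f j) (y : L) :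
    Finset.univ.image (A.piecewise (fun _ => y) f) = insert y (Finset.univ.image f) := by
  ext z
  simp only [Finset.mem_image, Finset.mem_univ, true_and, Finset.mem_insert]
  constructor
  · rintro ⟨j, rfl⟩
    by_cases hj : j ∈ A <;> simp [hj]
  · rintro (rfl | ⟨j, rfl⟩)
    · exact hA.imp fun a ha => by simp [ha]
    · by_cases hj : j ∈ A
      · exact (hf j hj).imp fun c hc => by simp [hc]
      · exact ⟨j, by simp [hj]⟩

lemma exists_fibre_split {b : ℕ} (hb : Fintype.card J ≤ 2 * b) {f : J → J}
    (hf : (Finset.univ.image f).card < Fintype.card J) :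
    ∃ (l l' : J) (A B : Finset J), A.card ≤ b ∧ B.card ≤ b ∧
      (∀ j, f j = l ↔ j ∈ A ∨ j ∈ B) ∧ (∀ j, f j ≠ l') ∧ l ≠ l' ∧
      (Finset.univ.image (A.piecewise (fun _ => l') f)).card = (Finset.univ.image f).card + 1 := by
  obtain ⟨j₁, -, j₂, -, hne, heq⟩ := Finset.exists_ne_map_eq_of_card_lt_of_maps_to
    hf fun j _ => Finset.mem_image_of_mem f (Finset.mem_univ j)
  obtain ⟨l', hl'⟩ : ∃ l', ∀ j, f j ≠ l' := by
    by_contra! hsurj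
    exact hf.ne (by rw [Finset.image_univ_of_surjective hsurj, Finset.card_univ])
  let F : Finset J := {j | f j = f j₁}
  have hF : 1 < F.card := Finset.one_lt_card.mpr ⟨j₁, by simp [F], j₂, by simp [F, heq], hne⟩
  have hFb : F.card ≤ 2 * b := (Finset.card_le_univ F).trans hb
  obtain ⟨A, hAF, hA⟩ := Finset.exists_subset_card_eq (Nat.div_le_self F.card 2)
  have hcard := Finset.card_sdiff_add_card_eq_card hAF
  have hA_nonempty : A.Nonempty := Finset.card_pos.mp (by omega)
  obtain ⟨c, hc⟩ : (F \ A).Nonempty := Finset.card_pos.mp (by omega)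
  have mem_F (j : J) : j ∈ F ↔ f j = f j₁ := by simp [F]
  refine ⟨f j₁, l', A, F \ A, by omega, by omega, fun j => ?_, hl', hl' j₁, ?_⟩
  · rw [← mem_F, ← Finset.mem_union, Finset.union_sdiff_of_subset hAF]
  · rw [image_piecewise_const hA_nonempty, Finset.card_insert_of_notMem (by simpa using hl')]
    intro j hj
    rw [Finset.mem_sdiff, mem_F] at hc
    exact ⟨c, hc.2, hc.1.trans ((mem_F j).mp (hAF hj)).symm⟩

end FibreSplit

section SharedSamples

variable {ι J L : Type*} [Fintype ι]

/-- The correlation gap of `p` under the weights `w`: the mean of `p i i` for one sample `i` used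
twice, minus the mean of `p i i'` for two independent samples. -/
def correlationGap (w : ι → ℝ) (p : ι → ι → ℝ) : ℝ :=
  ∑ i, w i * p i i - ∑ i, ∑ i', w i * (w i' * p i i')

lemma correlationGap_sum {A : Type*} (w : ι → ℝ) (s : Finset A) (p : A → ι → ι → ℝ) :
    correlationGap w (fun i i' => ∑ a ∈ s, p a i i') = ∑ a ∈ s, correlationGap w (p a) := by
  simp only [correlationGap, Finset.mul_sum, Finset.sum_sub_distrib, Finset.sum_comm (t := s)]

lemma correlationGap_const_mul (w : ι → ℝ) (c : ℝ) (p : ι → ι → ℝ) :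
    correlationGap w (fun i i' => c * p i i') = c * correlationGap w p := by
  simp only [correlationGap, mul_left_comm _ c, ← Finset.mul_sum, mul_sub]

variable [Fintype L] [DecidableEq L]

lemma sum_prod_mul_resample {R : Type*} [CommSemiring R] {w : ι → R} (hw : ∑ i, w i = 1)
    (l : L) (F : (L → ι) → R) :
    ∑ s : L → ι, (∏ x, w (s x)) * ∑ i, w i * F (Function.update s l i) =
      ∑ s : L → ι, (∏ x, w (s x)) * F s := by
  let swap : (L → ι) × ι ≃ (L → ι) × ι :=
    Function.Involutive.toPerm (fun p => (Function.update p.1 l p.2, p.1 l)) fun p => by simp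
  have swap_apply (p : (L → ι) × ι) : swap p = (Function.update p.1 l p.2, p.1 l) := rfl
  have weight_swap (s : L → ι) (i : ι) :
      (∏ x, w (Function.update s l i x)) * w (s l) = (∏ x, w (s x)) * w i := by
    simp only [Function.apply_update (fun _ => w), Finset.prod_update_of_mem (Finset.mem_univ l),
      ← Finset.mul_prod_erase _ (fun x => w (s x)) (Finset.mem_univ l),
      Finset.sdiff_singleton_eq_erase]
    ring
  calc ∑ s : L → ι, (∏ x, w (s x)) * ∑ i, w i * F (Function.update s l i)
      = ∑ p : (L → ι) × ι, (∏ x, w ((swap p).1 x)) * w (swap p).2 * F (swap p).1 := by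
        simp only [swap_apply, weight_swap, Fintype.sum_prod_type, Finset.mul_sum, mul_assoc]
    _ = ∑ p : (L → ι) × ι, (∏ x, w (p.1 x)) * w p.2 * F p.1 :=
        swap.sum_comp fun p => (∏ x, w (p.1 x)) * w p.2 * F p.1
    _ = ∑ s : L → ι, (∏ x, w (s x)) * F s := by
        simp only [Fintype.sum_prod_type, mul_right_comm _ (w _), ← Finset.mul_sum, hw, mul_one]

/-- The expectation of `g` when independent samples are drawn for the labels `L` and `j` receives
the sample of its label `f j`. -/
def labelledExp (w : ι → ℝ) (f : J → L) (g : (J → ι) → ℝ) : ℝ :=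
  ∑ s : L → ι, (∏ l, w (s l)) * g (s ∘ f)

lemma labelledExp_const {w : ι → ℝ} (hw : ∑ i, w i = 1) (l : L) (g : (J → ι) → ℝ) :
    labelledExp w (fun _ => l) g = ∑ i, w i * g (fun _ => i) := by
  rw [labelledExp, ← sum_prod_mul_resample hw l]
  simp [Function.comp_def, ← Finset.sum_mul, ← Fintype.prod_sum (fun _ => w), hw]

lemma labelledExp_of_bijective [Fintype J] [DecidableEq J] (w : ι → ℝ) {f : J → L}
    (hf : f.Bijective) (g : (J → ι) → ℝ) :
    labelledExp w f g = ∑ s : J → ι, (∏ j, w (s j)) * g s := by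
  let e := Equiv.ofBijective f hf
  refine Fintype.sum_equiv (e.symm.arrowCongr (.refl ι)) _ _ fun s => ?_
  rw [← e.prod_comp]
  rfl

variable [DecidableEq J]

lemma labelledExp_sub_labelledExp_piecewise {w : ι → ℝ} (hw : ∑ i, w i = 1) {f : J → L} {l l' : L}
    (hl' : ∀ j, f j ≠ l') {A B : Finset J} (hl : ∀ j, f j = l ↔ j ∈ A ∨ j ∈ B) (hll' : l ≠ l')
    (g : (J → ι) → ℝ) :
    labelledExp w f g - labelledExp w (A.piecewise (fun _ => l') f) g =
      ∑ s : L → ι, (∏ x, w (s x)) * correlationGap w fun i i' =>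
        g (A.piecewise (fun _ => i) (B.piecewise (fun _ => i') (s ∘ f))) := by
  have shared (s : L → ι) (i : ι) : Function.update s l i ∘ f =
      A.piecewise (fun _ => i) (B.piecewise (fun _ => i) (s ∘ f)) := by
    ext j
    have := hl j
    by_cases hA : j ∈ A <;> by_cases hB : j ∈ B <;> simp_all [Function.update_apply]
  have separate (s : L → ι) (i i' : ι) :
      Function.update (Function.update s l' i) l i' ∘ A.piecewise (fun _ => l') f =
        A.piecewise (fun _ => i) (B.piecewise (fun _ => i') (s ∘ f)) := by
    ext j
    have := hl j
    by_cases hA : j ∈ A <;> by_cases hB : j ∈ B <;> simp_all [Function.update_apply, hll'.symm]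
  simp only [labelledExp, correlationGap, mul_sub, Finset.sum_sub_distrib]
  -- Resample `l` and `l'` conditionally on all other labels.
  congr 1
  · rw [← sum_prod_mul_resample hw l]
    simp only [shared]
  · rw [← sum_prod_mul_resample hw l, ← sum_prod_mul_resample hw l']
    simp only [separate, Finset.mul_sum]

/-- `g` cannot tell a sample shared by two blocks of at most `b` parties from two independent ones
by more than `ε`, whatever the other parties hold. A party in both blocks counts for the first. -/
def BlockwiseClose (w : ι → ℝ) (b : ℕ) (ε : ℝ) (g : (J → ι) → ℝ) : Prop :=
  ∀ A B : Finset J, A.card ≤ b → B.card ≤ b → ∀ s : J → ι,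
    |correlationGap w fun i i' =>
      g (A.piecewise (fun _ => i) (B.piecewise (fun _ => i') s))| ≤ ε

namespace BlockwiseClose

variable {w : ι → ℝ} {b : ℕ} {ε : ℝ} {g : (J → ι) → ℝ}

lemma abs_labelledExp_sub_piecewise_le (hg : BlockwiseClose w b ε g) (hw0 : ∀ i, 0 ≤ w i)
    (hw1 : ∑ i, w i = 1) {f : J → L} {l l' : L} (hl' : ∀ j, f j ≠ l') (hll' : l ≠ l')
    {A B : Finset J} (hl : ∀ j, f j = l ↔ j ∈ A ∨ j ∈ B) (hA : A.card ≤ b) (hB : B.card ≤ b) :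
    |labelledExp w f g - labelledExp w (A.piecewise (fun _ => l') f) g| ≤ ε := by
  have weight_nonneg (s : L → ι) : 0 ≤ ∏ l, w (s l) := Finset.prod_nonneg fun _ _ => hw0 _
  rw [labelledExp_sub_labelledExp_piecewise hw1 hl' hl hll']
  calc _ ≤ ∑ s : L → ι, (∏ l, w (s l)) * |correlationGap w fun i i' =>
            g (A.piecewise (fun _ => i) (B.piecewise (fun _ => i') (s ∘ f)))| := by
        refine (Finset.abs_sum_le_sum_abs _ _).trans_eq (Finset.sum_congr rfl fun s _ => ?_)
        rw [abs_mul, abs_of_nonneg (weight_nonneg s)]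
    _ ≤ ∑ s : L → ι, (∏ l, w (s l)) * ε :=
        Finset.sum_le_sum fun s _ =>
          mul_le_mul_of_nonneg_left (hg A B hA hB (s ∘ f)) (weight_nonneg s)
    _ = ε := by
        rw [← Finset.sum_mul, ← Fintype.prod_sum fun _ => w, hw1, Finset.prod_const_one, one_mul]

variable [Fintype J]

lemma abs_labelledExp_sub_le (hg : BlockwiseClose w b ε g) (hw0 : ∀ i, 0 ≤ w i)
    (hw1 : ∑ i, w i = 1) (hb : Fintype.card J ≤ 2 * b) {m : ℕ} :
    ∀ {f : J → J}, (Finset.univ.image f).card + m = Fintype.card J →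
      |labelledExp w f g - ∑ s : J → ι, (∏ j, w (s j)) * g s| ≤ m * ε := by
  induction m with
  | zero =>
    intro f hf
    have hf : f.Injective := by
      rw [← Set.injOn_univ, ← Finset.coe_univ]
      exact Finset.injOn_of_card_image_eq hf
    simp [labelledExp_of_bijective w (Finite.injective_iff_bijective.mp hf)]
  | succ m ih =>
    intro f hf
    obtain ⟨l, l', A, B, hA, hB, hl, hl', hll', himage⟩ := exists_fibre_split hb (f := f) (by omega)
    have split := hg.abs_labelledExp_sub_piecewise_le hw0 hw1 hl' hll' hl hA hB
    have rest := ih (f := A.piecewise (fun _ => l') f) (by omega)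
    calc _ ≤ _ := abs_sub_le _ (labelledExp w (A.piecewise (fun _ => l') f) g) _
      _ ≤ ε + m * ε := add_le_add split rest
      _ = _ := by push_cast; ring

theorem abs_shared_sub_independent_le [Nonempty J] (hg : BlockwiseClose w b ε g)
    (hw0 : ∀ i, 0 ≤ w i) (hw1 : ∑ i, w i = 1) (hb : Fintype.card J ≤ 2 * b) :
    |∑ i, w i * g (fun _ => i) - ∑ s : J → ι, (∏ j, w (s j)) * g s| ≤
      (Fintype.card J - 1 : ℕ) * ε := by
  obtain ⟨l⟩ := ‹Nonempty J›
  have card_pos : 0 < Fintype.card J := Fintype.card_pos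
  rw [← labelledExp_const hw1 l]
  refine hg.abs_labelledExp_sub_le hw0 hw1 hb ?_
  rw [Finset.image_const ⟨l, Finset.mem_univ l⟩, Finset.card_singleton]
  omega

end BlockwiseClose

end SharedSamples

open scoped MatrixOrder in
lemma exists_eq_conjTranspose_mul_self {n 𝕜 : Type*} [Fintype n] [RCLike 𝕜] {X : Matrix n n 𝕜}
    (hX : X.PosSemidef) : ∃ Y : Matrix n n 𝕜, X = Yᴴ * Y := by
  classical
  exact CStarAlgebra.nonneg_iff_eq_star_mul_self.mp hX.nonneg

section PiKronecker

variable {J R : Type*} [Fintype J] [CommSemiring R] {l m n : J → Type*}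

/-- The Kronecker product of a finite family of matrices, indexed by families of indices. -/
def piKronecker (X : ∀ j, Matrix (m j) (n j) R) : Matrix (∀ j, m j) (∀ j, n j) R :=
  of fun e e' => ∏ j, X j (e j) (e' j)

lemma piKronecker_mul_piKronecker [DecidableEq J] [∀ j, Fintype (m j)]
    (X : ∀ j, Matrix (l j) (m j) R) (Y : ∀ j, Matrix (m j) (n j) R) :
    piKronecker X * piKronecker Y = piKronecker fun j => X j * Y j := by
  ext e e'
  simp [piKronecker, mul_apply, Finset.prod_mul_distrib, Fintype.prod_sum]

lemma conjTranspose_piKronecker [StarRing R] (X : ∀ j, Matrix (m j) (n j) R) :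
    (piKronecker X)ᴴ = piKronecker fun j => (X j)ᴴ := by
  ext e e'
  simp [piKronecker, star_prod]

lemma piKronecker_one [∀ j, DecidableEq (m j)] :
    piKronecker (fun j => (1 : Matrix (m j) (m j) R)) = 1 := by
  ext e e'
  simp [piKronecker, one_apply, Finset.prod_ite_zero, funext_iff]

lemma sum_piKronecker [DecidableEq J] {O : J → Type*} [∀ j, Fintype (O j)]
    (X : ∀ j, O j → Matrix (m j) (n j) R) :
    ∑ o : ∀ j, O j, piKronecker (fun j => X j (o j)) = piKronecker fun j => ∑ o, X j o := by
  ext e e'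
  simp [piKronecker, Matrix.sum_apply, Fintype.prod_sum]

lemma piKronecker_eq_submatrix_kronecker (p : J → Prop) [DecidablePred p]
    (X : ∀ j, Matrix (m j) (n j) R) :
    piKronecker X = (piKronecker (fun j : {j // p j} => X j) ⊗ₖ
      piKronecker fun j : {j // ¬p j} => X j).submatrix
        (Equiv.piEquivPiSubtypeProd p m) (Equiv.piEquivPiSubtypeProd p n) := by
  ext e e'
  exact (Fintype.prod_subtype_mul_prod_subtype p fun j => X j (e j) (e' j)).symm

lemma piKronecker_fin_two {m n : Fin 2 → Type*} (X : ∀ j, Matrix (m j) (n j) R) :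
    piKronecker X = (X 0 ⊗ₖ X 1).submatrix (piFinTwoEquiv m) (piFinTwoEquiv n) := by
  ext e e'
  exact Fin.prod_univ_two fun j => X j (e j) (e' j)

lemma posSemidef_piKronecker {𝕜 : Type*} [RCLike 𝕜] [∀ j, Finite (m j)]
    {X : ∀ j, Matrix (m j) (m j) 𝕜} (hX : ∀ j, (X j).PosSemidef) :
    (piKronecker X).PosSemidef := by
  classical
  have := fun j => Fintype.ofFinite (m j)
  choose Y hY using fun j => exists_eq_conjTranspose_mul_self (hX j)
  rw [show X = fun j => (Y j)ᴴ * Y j from funext hY, ← piKronecker_mul_piKronecker,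
    ← conjTranspose_piKronecker]
  exact posSemidef_conjTranspose_mul_self _

end PiKronecker

lemma trace_submatrix_equiv {m n R : Type*} [Fintype m] [Fintype n] [AddCommMonoid R]
    (e : n ≃ m) (X : Matrix m m R) : (X.submatrix e e).trace = X.trace :=
  e.sum_comp fun i => X i i

lemma trace_submatrix_equiv_mul {m n R : Type*} [Fintype m] [Fintype n]
    [NonUnitalNonAssocSemiring R] (e : n ≃ m) (X Y : Matrix m m R) :
    (X.submatrix e e * Y.submatrix e e).trace = (X * Y).trace := by
  rw [submatrix_mul_equiv, trace_submatrix_equiv]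

namespace IsPOVM

variable {m n O : Type*} [Fintype m] [DecidableEq m] [Fintype n] [DecidableEq n] [Fintype O]
  {M : O → Matrix m m ℂ}

lemma submatrix (hM : IsPOVM M) (e : n ≃ m) : IsPOVM fun o => (M o).submatrix e e := by
  refine ⟨fun o => (hM.1 o).submatrix e, ?_⟩
  rw [← submatrix_one_equiv e, ← hM.2]
  ext a a'
  simp [Matrix.sum_apply]

lemma kronecker_one (hM : IsPOVM M) : IsPOVM fun o => M o ⊗ₖ (1 : Matrix n n ℂ) := by
  refine ⟨fun o => (hM.1 o).kronecker PosSemidef.one, ?_⟩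
  rw [← one_kronecker_one, ← hM.2]
  ext a a'
  simp [Matrix.sum_apply, Finset.sum_mul]

lemma extend {O' : Type*} [Fintype O'] (hM : IsPOVM M) (g : O ↪ O') :
    IsPOVM (Function.extend g M 0) := by
  constructor
  · intro o'
    by_cases ho' : ∃ o, g o = o'
    · obtain ⟨o, rfl⟩ := ho'
      simpa [g.injective.extend_apply] using hM.1 o
    · simpa [Function.extend_apply' _ _ _ ho'] using PosSemidef.zero
  · rw [← hM.2]
    refine (Fintype.sum_of_injective g g.injective M (Function.extend g M 0) ?_ fun o => ?_).symm
    · exact fun o' ho' => Function.extend_apply' _ _ _ ho'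
    · exact (g.injective.extend_apply M 0 o).symm

lemma pi {J : Type*} [Fintype J] [DecidableEq J] {E O : J → Type*} [∀ j, Fintype (E j)]
    [∀ j, DecidableEq (E j)] [∀ j, Fintype (O j)] {M : ∀ j, O j → Matrix (E j) (E j) ℂ}
    (hM : ∀ j, IsPOVM (M j)) :
    IsPOVM fun o : ∀ j, O j => piKronecker fun j => M j (o j) := by
  refine ⟨fun o => posSemidef_piKronecker fun j => (hM j).1 (o j), ?_⟩
  simp only [sum_piKronecker, (hM _).2, piKronecker_one]

end IsPOVM

section Compress

variable {E H : Type*} [Fintype H]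

/-- The compression `(1 ⊗ ⟨ψ|) M (1 ⊗ |ψ⟩)` of an operator on `E ⊗ H` to `E`. -/
def compress (ψ : H → ℂ) (M : Matrix (E × H) (E × H) ℂ) : Matrix E E ℂ :=
  of fun e e' => ∑ x, ∑ x', star (ψ x) * M (e, x) (e', x') * ψ x'

lemma compress_zero (ψ : H → ℂ) : compress ψ (0 : Matrix (E × H) (E × H) ℂ) = 0 := by
  ext e e'
  simp [compress]

lemma compress_sum {O : Type*} (ψ : H → ℂ) (s : Finset O) (M : O → Matrix (E × H) (E × H) ℂ) :
    compress ψ (∑ o ∈ s, M o) = ∑ o ∈ s, compress ψ (M o) := by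
  ext e e'
  simp only [compress, of_apply, Matrix.sum_apply, Finset.mul_sum, Finset.sum_mul,
    Finset.sum_comm (t := s)]

lemma compress_one [DecidableEq E] [DecidableEq H] {ψ : H → ℂ} (hψ : star ψ ⬝ᵥ ψ = 1) :
    compress ψ (1 : Matrix (E × H) (E × H) ℂ) = 1 := by
  ext e e'
  by_cases h : e = e' <;> simp_all [compress, one_apply, dotProduct]

lemma compress_submatrix {E' H' : Type*} [Fintype H'] (ψ : H → ℂ)
    (M : Matrix (E × H) (E × H) ℂ) (e : E' ≃ E) (h : H' ≃ H) :
    compress (ψ ∘ h) (M.submatrix (e.prodCongr h) (e.prodCongr h)) =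
      (compress ψ M).submatrix e e := by
  ext a a'
  simp only [compress, of_apply, submatrix_apply, Equiv.prodCongr_apply, Prod.map,
    Function.comp_apply]
  rw [← h.sum_comp]
  exact Finset.sum_congr rfl fun x _ => h.sum_comp fun x' =>
    star (ψ (h x)) * M (e a, h x) (e a', x') * ψ x'

lemma posSemidef_compress [Finite E] (ψ : H → ℂ) {M : Matrix (E × H) (E × H) ℂ}
    (hM : M.PosSemidef) : (compress ψ M).PosSemidef := by
  classical
  have := Fintype.ofFinite E
  let A : Matrix (E × H) E ℂ := of fun p e => if p.1 = e then ψ p.2 else 0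
  have hA : compress ψ M = Aᴴ * M * A := by
    ext e e'
    rw [compress, of_apply, Finset.sum_comm]
    simp [A, mul_apply, Fintype.sum_prod_type, Finset.sum_mul, apply_ite star]
  rw [hA]
  exact hM.conjTranspose_mul_mul_same A

lemma compress_piKronecker {J : Type*} [Fintype J] [DecidableEq J] {E H : J → Type*}
    [∀ j, Fintype (H j)] (ψ : ∀ j, H j → ℂ) (M : ∀ j, Matrix (E j × H j) (E j × H j) ℂ) :
    compress (fun x : ∀ j, H j => ∏ j, ψ j (x j))
        ((piKronecker M).submatrix (Equiv.arrowProdEquivProdArrow J E H).symm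
          (Equiv.arrowProdEquivProdArrow J E H).symm) =
      piKronecker fun j => compress (ψ j) (M j) := by
  ext e e'
  simp only [compress, piKronecker, of_apply, submatrix_apply, star_prod,
    Equiv.arrowProdEquivProdArrow_symm_apply, ← Finset.prod_mul_distrib, Fintype.prod_sum]

lemma compress_kronecker_one {H' : Type*} [Fintype H'] [DecidableEq H'] (ψ : H → ℂ) {φ : H' → ℂ}
    (hφ : star φ ⬝ᵥ φ = 1) (M : Matrix (E × H) (E × H) ℂ) :
    compress (fun x : H × H' => ψ x.1 * φ x.2) ((M ⊗ₖ (1 : Matrix H' H' ℂ)).submatrix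
      (Equiv.prodAssoc E H H').symm (Equiv.prodAssoc E H H').symm) = compress ψ M := by
  ext e e'
  simp only [dotProduct, Pi.star_apply] at hφ
  simp only [compress, star_mul', submatrix_apply, Equiv.prodAssoc_symm_apply, kroneckerMap_apply,
    one_apply, mul_ite, mul_one, mul_zero, ite_mul, zero_mul, Fintype.sum_prod_type,
    Finset.sum_ite_eq, Finset.mem_univ, if_true, of_apply]
  refine Finset.sum_congr rfl fun x _ => ?_
  rw [Finset.sum_comm]
  refine Finset.sum_congr rfl fun x' _ => ?_
  rw [← mul_one (_ * ψ x'), ← hφ, Finset.mul_sum]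
  exact Finset.sum_congr rfl fun y _ => by ring

lemma trace_compress_mul [Fintype E] (ψ : H → ℂ) (M : Matrix (E × H) (E × H) ℂ)
    (ρ : Matrix E E ℂ) :
    (compress ψ M * ρ).trace =
      ∑ e, ∑ x, ∑ e', ∑ x', M (e, x) (e', x') * ρ e' e * (ψ x' * star (ψ x)) := by
  simp only [trace, diag_apply, mul_apply, compress, of_apply, Finset.sum_mul]
  refine Finset.sum_congr rfl fun e _ => ?_
  rw [Finset.sum_comm]
  refine Finset.sum_congr rfl fun x _ => Finset.sum_congr rfl fun e' _ =>
    Finset.sum_congr rfl fun x' _ => by ring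

end Compress

section Copies

variable {V : Type*}

/-- The amplitudes of `ψ^{⊗ T}`. -/
def copies (T : Type*) [Fintype T] (ψ : V → ℂ) (x : T → V) : ℂ := ∏ c, ψ (x c)

lemma star_copies_dotProduct_copies [Fintype V] {T : Type*} [Fintype T] [DecidableEq T]
    {ψ : V → ℂ} (hψ : star ψ ⬝ᵥ ψ = 1) : star (copies T ψ) ⬝ᵥ copies T ψ = 1 := by
  simp only [dotProduct, Pi.star_apply, copies, star_prod, ← Finset.prod_mul_distrib] at *
  rw [← Fintype.prod_sum fun (_ : T) x => star (ψ x) * ψ x]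
  rw [hψ, Finset.prod_const_one]

variable {T R : Type*} [Fintype T] [Fintype R]

lemma copies_sum (ψ : V → ℂ) (x : T ⊕ R → V) :
    copies (T ⊕ R) ψ x = copies T ψ (x ∘ Sum.inl) * copies R ψ (x ∘ Sum.inr) :=
  Fintype.prod_sum_type _

lemma copies_prod (ψ : V → ℂ) (x : T × R → V) :
    copies (T × R) ψ x = ∏ a, copies R ψ fun c => x (a, c) :=
  Fintype.prod_prod_type _

lemma copies_comp_equiv (ψ : V → ℂ) (e : T ≃ R) (x : R → V) :
    copies T ψ (x ∘ e) = copies R ψ x :=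
  e.prod_comp fun c => ψ (x c)

end Copies

/-- The family `N` of measurements, indexed by `i : ι`, arises by measuring one fixed POVM on the
register `E` together with an ancilla in the pure state `Ψ i`. -/
def IsImplementable {ι E H O : Type*} [Fintype E] [DecidableEq E] [Fintype H] [DecidableEq H]
    [Fintype O] (Ψ : ι → H → ℂ) (N : O → ι → Matrix E E ℂ) : Prop :=
  ∃ M : O → Matrix (E × H) (E × H) ℂ, IsPOVM M ∧ ∀ o i, N o i = compress (Ψ i) (M o)

namespace IsImplementable

section

variable {ι E H O : Type*} [Fintype E] [DecidableEq E] [Fintype H] [DecidableEq H] [Fintype O]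
  {Ψ : ι → H → ℂ} {N : O → ι → Matrix E E ℂ}

lemma isPOVM (hN : IsImplementable Ψ N) {i : ι} (hΨ : star (Ψ i) ⬝ᵥ Ψ i = 1) :
    IsPOVM fun o => N o i := by
  obtain ⟨M, hM, hNM⟩ := hN
  simp only [hNM]
  exact ⟨fun o => posSemidef_compress _ (hM.1 o), by rw [← compress_sum, hM.2, compress_one hΨ]⟩

lemma submatrix {E' H' : Type*} [Fintype E'] [DecidableEq E'] [Fintype H'] [DecidableEq H']
    (hN : IsImplementable Ψ N) (e : E' ≃ E) (h : H' ≃ H) :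
    IsImplementable (fun i => Ψ i ∘ h) fun o i => (N o i).submatrix e e := by
  obtain ⟨M, hM, hNM⟩ := hN
  exact ⟨_, hM.submatrix (e.prodCongr h), fun o i => by
    simp only [hNM, compress_submatrix]⟩

lemma extend {O' : Type*} [Fintype O'] (hN : IsImplementable Ψ N) (g : O ↪ O') :
    IsImplementable Ψ (Function.extend g N 0) := by
  obtain ⟨M, hM, hNM⟩ := hN
  refine ⟨_, hM.extend g, fun o' i => ?_⟩
  by_cases ho' : ∃ o, g o = o'
  · obtain ⟨o, rfl⟩ := ho'
    rw [g.injective.extend_apply, g.injective.extend_apply, hNM]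
  · simp [Function.extend_apply' _ _ _ ho', compress_zero]

lemma pad {H' : Type*} [Fintype H'] [DecidableEq H'] (hN : IsImplementable Ψ N)
    {Φ : ι → H' → ℂ} (hΦ : ∀ i, star (Φ i) ⬝ᵥ Φ i = 1) :
    IsImplementable (fun i (x : H × H') => Ψ i x.1 * Φ i x.2) N := by
  obtain ⟨M, hM, hNM⟩ := hN
  exact ⟨_, hM.kronecker_one.submatrix (Equiv.prodAssoc E H H').symm, fun o i => by
    rw [hNM, compress_kronecker_one _ (hΦ i)]⟩

end

lemma pi {ι J : Type*} [Fintype J] [DecidableEq J] {E H O : J → Type*}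
    [∀ j, Fintype (E j)] [∀ j, DecidableEq (E j)] [∀ j, Fintype (H j)] [∀ j, DecidableEq (H j)]
    [∀ j, Fintype (O j)] {Ψ : ∀ j, ι → H j → ℂ} {N : ∀ j, O j → ι → Matrix (E j) (E j) ℂ}
    (hN : ∀ j, IsImplementable (Ψ j) (N j)) :
    IsImplementable (fun i (x : ∀ j, H j) => ∏ j, Ψ j i (x j))
      fun (o : ∀ j, O j) i => piKronecker fun j => N j (o j) i := by
  choose M hM hNM using hN
  refine ⟨_, (IsPOVM.pi hM).submatrix (Equiv.arrowProdEquivProdArrow J E H).symm,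
    fun o i => ?_⟩
  simp only [hNM, compress_piKronecker]

section Copies

variable {ι V E O T : Type*} [Fintype V] [DecidableEq V] [Fintype E] [DecidableEq E] [Fintype O]
  [Fintype T] [DecidableEq T] {v : ι → V → ℂ}

lemma copies_mono {N : O → ι → Matrix E E ℂ} (hN : IsImplementable (fun i => copies T (v i)) N)
    (hv : ∀ i, star (v i) ⬝ᵥ v i = 1) {T' : Type*} [Fintype T'] [DecidableEq T']
    (hT : Fintype.card T ≤ Fintype.card T') :
    IsImplementable (fun i => copies T' (v i)) N := by
  let R := Fin (Fintype.card T' - Fintype.card T)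
  have e : T' ≃ T ⊕ R := Fintype.equivOfCardEq (by simp [R, hT])
  let split : (T' → V) ≃ (T → V) × (R → V) :=
    (e.arrowCongr (.refl V)).trans (Equiv.sumArrowEquivProdArrow T R V)
  have copies_split (ψ : V → ℂ) : copies T' ψ =
      (fun x : (T → V) × (R → V) => copies T ψ x.1 * copies R ψ x.2) ∘ split := by
    ext x
    rw [← copies_comp_equiv ψ e.symm, copies_sum]
    rfl
  simpa only [copies_split, Equiv.coe_refl, submatrix_id_id] using
    (hN.pad fun i => star_copies_dotProduct_copies (hv i)).submatrix (.refl E) split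

lemma pi_copies {J : Type*} [Fintype J] [DecidableEq J] {E O : J → Type*}
    [∀ j, Fintype (E j)] [∀ j, DecidableEq (E j)] [∀ j, Fintype (O j)]
    {N : ∀ j, O j → ι → Matrix (E j) (E j) ℂ}
    (hN : ∀ j, IsImplementable (fun i => copies T (v i)) (N j)) :
    IsImplementable (fun i => copies (J × T) (v i))
      fun (o : ∀ j, O j) i => piKronecker fun j => N j (o j) i := by
  have copies_curry (ψ : V → ℂ) : copies (J × T) ψ =
      (fun x : J → T → V => ∏ j, copies T ψ (x j)) ∘ Equiv.curry J T V := by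
    ext x
    exact copies_prod ψ x
  simpa only [copies_curry, Equiv.coe_refl, submatrix_id_id] using
    (pi hN).submatrix (.refl _) (Equiv.curry J T V)

end Copies

end IsImplementable

section AcceptProb

variable {ι J : Type*} [Fintype J] {E O : J → Type*} [∀ j, Fintype (E j)]

/-- The probability that the joint outcome lies in `S` when the parties share `ρ` and party `j`
measures `X j` for the sample `s j`. -/
def acceptProb [DecidableEq J] (X : ∀ j, O j → ι → Matrix (E j) (E j) ℂ)
    (ρ : Matrix (∀ j, E j) (∀ j, E j) ℂ) (S : Finset (∀ j, O j)) (s : J → ι) : ℝ :=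
  ∑ o ∈ S, (piKronecker (fun j => X j (o j) (s j)) * ρ).trace.re

end AcceptProb

section QProb

variable {q t n V : ℕ} (k : Fin q → ℕ)
  (ρ : Matrix ((j : Fin q) → Fin (k j)) ((j : Fin q) → Fin (k j)) ℂ)
  (M : (j : Fin q) → (Fin n → Bool) →
    Matrix (Fin (k j) × (Fin t → Fin V)) (Fin (k j) × (Fin t → Fin V)) ℂ)

lemma qProb_mixture {I : Type*} [Fintype I] (c : I → ℝ) (ψ : I → Fin q → (Fin t → Fin V) → ℂ)
    {χ : Matrix (Fin q → Fin t → Fin V) (Fin q → Fin t → Fin V) ℂ}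
    (hχ : ∀ x x', χ x x' = ∑ a, (c a : ℂ) * ((∏ j, ψ a j (x j)) * star (∏ j, ψ a j (x' j))))
    (o : Fin q → Fin n → Bool) :
    qProb q t n V k ρ M χ o =
      ∑ a, c a * (piKronecker (fun j => compress (ψ a j) (M j (o j))) * ρ).trace.re := by
  have trace_eq (a : I) : (piKronecker (fun j => compress (ψ a j) (M j (o j))) * ρ).trace =
      ∑ e : (j : Fin q) → Fin (k j), ∑ x : Fin q → Fin t → Fin V,
      ∑ e' : (j : Fin q) → Fin (k j), ∑ x' : Fin q → Fin t → Fin V,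
        (∏ j, M j (o j) (e j, x j) (e' j, x' j)) * ρ e' e *
          ((∏ j, ψ a j (x' j)) * star (∏ j, ψ a j (x j))) := by
    rw [← compress_piKronecker, trace_compress_mul]
    rfl
  have weight_re (a : I) (z : ℂ) : c a * z.re = (c a * z).re := (Complex.re_ofReal_mul _ _).symm
  simp only [qProb, weight_re, ← Complex.re_sum, trace_eq, hχ, Finset.mul_sum,
    Finset.sum_comm (s := (Finset.univ : Finset I)), mul_left_comm (_ * ρ _ _)]

variable {ι : Type*} [Fintype ι] (w : ι → ℝ) (v : ι → Fin V → ℂ)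

lemma qProb_chiId (o : Fin q → Fin n → Bool) :
    qProb q t n V k ρ M (chiId q t V w v) o = ∑ i, w i *
      (piKronecker (fun j => compress (copies (Fin t) (v i)) (M j (o j))) * ρ).trace.re := by
  refine qProb_mixture k ρ M w (fun i _ => copies (Fin t) (v i)) (fun x x' => ?_) o
  simp only [chiId, of_apply, copies, mul_assoc, starRingEnd_apply]

lemma qProb_chiInd (o : Fin q → Fin n → Bool) :
    qProb q t n V k ρ M (chiInd q t V w v) o = ∑ s : Fin q → ι, (∏ j, w (s j)) *
      (piKronecker (fun j => compress (copies (Fin t) (v (s j))) (M j (o j))) * ρ).trace.re := by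
  refine qProb_mixture k ρ M (fun s : Fin q → ι => ∏ j, w (s j))
    (fun s j => copies (Fin t) (v (s j))) (fun x x' => ?_) o
  simp only [chiInd, of_apply, copies, mul_assoc, starRingEnd_apply, Fintype.prod_sum,
    Finset.prod_mul_distrib, star_prod, Complex.ofReal_prod]

lemma sum_qProb_sub_qProb (S : Finset (Fin q → Fin n → Bool)) :
    ∑ o ∈ S, (qProb q t n V k ρ M (chiId q t V w v) o -
        qProb q t n V k ρ M (chiInd q t V w v) o) =
      ∑ i, w i *
          acceptProb (fun j o i => compress (copies (Fin t) (v i)) (M j o)) ρ S (fun _ => i) -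
        ∑ s : Fin q → ι, (∏ j, w (s j)) *
          acceptProb (fun j o i => compress (copies (Fin t) (v i)) (M j o)) ρ S s := by
  simp only [qProb_chiId, qProb_chiInd, acceptProb, Finset.sum_sub_distrib, Finset.mul_sum,
    Finset.sum_comm (s := S)]

end QProb

section PairAcceptProb

variable {ι E₁ E₂ O₁ O₂ : Type*} [Fintype E₁] [Fintype E₂]

/-- The probability that the joint outcome of two parties sharing `ρ` lies in `S` when the first
measures `N₁` for the sample `i` and the second `N₂` for the sample `i'`. -/
def pairAcceptProb (N₁ : O₁ → ι → Matrix E₁ E₁ ℂ) (N₂ : O₂ → ι → Matrix E₂ E₂ ℂ)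
    (ρ : Matrix (E₁ × E₂) (E₁ × E₂) ℂ) (S : Finset (O₁ × O₂)) (i i' : ι) : ℝ :=
  ∑ o ∈ S, ((N₁ o.1 i ⊗ₖ N₂ o.2 i') * ρ).trace.re

lemma acceptProb_fin_two {E O : Fin 2 → Type*} [∀ j, Fintype (E j)]
    (X : ∀ j, O j → ι → Matrix (E j) (E j) ℂ) (ρ : Matrix (E 0 × E 1) (E 0 × E 1) ℂ)
    (S : Finset (O 0 × O 1)) (s : Fin 2 → ι) :
    acceptProb X (ρ.submatrix (piFinTwoEquiv E) (piFinTwoEquiv E))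
        (S.map (piFinTwoEquiv O).symm.toEmbedding) s =
      pairAcceptProb (X 0) (X 1) ρ S (s 0) (s 1) := by
  simp only [acceptProb, pairAcceptProb, Finset.sum_map, piKronecker_fin_two,
    trace_submatrix_equiv_mul]
  rfl

variable (N₁ : O₁ → ι → Matrix E₁ E₁ ℂ) (N₂ : O₂ → ι → Matrix E₂ E₂ ℂ)
  (ρ : Matrix (E₁ × E₂) (E₁ × E₂) ℂ) (S : Finset (O₁ × O₂))

lemma pairAcceptProb_submatrix {E₁' E₂' : Type*} [Fintype E₁'] [Fintype E₂'] (e₁ : E₁' ≃ E₁)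
    (e₂ : E₂' ≃ E₂) :
    pairAcceptProb (fun o i => (N₁ o i).submatrix e₁ e₁) (fun o i => (N₂ o i).submatrix e₂ e₂)
        (ρ.submatrix (e₁.prodCongr e₂) (e₁.prodCongr e₂)) S =
      pairAcceptProb N₁ N₂ ρ S := by
  funext i i'
  refine Finset.sum_congr rfl fun o _ => ?_
  rw [← trace_submatrix_equiv_mul (e₁.prodCongr e₂)]
  rfl

lemma pairAcceptProb_extend {O₁' O₂' : Type*} (g₁ : O₁ ↪ O₁') (g₂ : O₂ ↪ O₂') :
    pairAcceptProb (Function.extend g₁ N₁ 0) (Function.extend g₂ N₂ 0) ρ (S.map (g₁.prodMap g₂)) =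
      pairAcceptProb N₁ N₂ ρ S := by
  funext i i'
  simp [pairAcceptProb, g₁.injective.extend_apply, g₂.injective.extend_apply]

lemma pairAcceptProb_smul (c : ℝ) (i i' : ι) :
    pairAcceptProb N₁ N₂ ((c : ℂ) • ρ) S i i' = c * pairAcceptProb N₁ N₂ ρ S i i' := by
  simp [pairAcceptProb, Finset.mul_sum]

end PairAcceptProb

lemma sum_fin_two_arrow {ι : Type*} [Fintype ι] (w : ι → ℝ) (p : ι → ι → ℝ) :
    ∑ s : Fin 2 → ι, (∏ j, w (s j)) * p (s 0) (s 1) = ∑ i, ∑ i', w i * (w i' * p i i') := by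
  rw [← (finTwoArrowEquiv ι).symm.sum_comp, Fintype.sum_prod_type]
  simp [Fin.prod_univ_two, mul_assoc]

section SharedPair

variable {V T N : ℕ} {ι : Type*} [Fintype ι] {w : ι → ℝ} {v : ι → Fin V → ℂ} {ε : ℝ}

lemma SSIq.abs_correlationGap_compress_le (h : SSIq ε 2 T N V w v) {k : Fin 2 → ℕ}
    {M : (j : Fin 2) → (Fin N → Bool) →
      Matrix (Fin (k j) × (Fin T → Fin V)) (Fin (k j) × (Fin T → Fin V)) ℂ}
    (hM : ∀ j, IsPOVM (M j)) {ρ : Matrix (Fin (k 0) × Fin (k 1)) (Fin (k 0) × Fin (k 1)) ℂ}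
    (hρ : IsDensity ρ) (S : Finset ((Fin N → Bool) × (Fin N → Bool))) :
    |correlationGap w (pairAcceptProb (fun o i => compress (copies (Fin T) (v i)) (M 0 o))
      (fun o i => compress (copies (Fin T) (v i)) (M 1 o)) ρ S)| ≤ ε := by
  let X (j : Fin 2) (o : Fin N → Bool) (i : ι) := compress (copies (Fin T) (v i)) (M j o)
  let φ := piFinTwoEquiv fun j => Fin (k j)
  let S' := S.map (piFinTwoEquiv fun _ => Fin N → Bool).symm.toEmbedding
  have accept (s : Fin 2 → ι) :
      acceptProb X (ρ.submatrix φ φ) S' s = pairAcceptProb (X 0) (X 1) ρ S (s 0) (s 1) :=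
    acceptProb_fin_two X ρ S s
  have hφρ : IsDensity (ρ.submatrix φ φ) :=
    ⟨hρ.1.submatrix φ, (trace_submatrix_equiv φ ρ).trans hρ.2⟩
  have key := h k (ρ.submatrix φ φ) M hφρ hM S'
  rwa [sum_qProb_sub_qProb, Fintype.sum_congr _ _ fun s => congrArg _ (accept s),
    Fintype.sum_congr _ _ fun i => congrArg _ (accept fun _ => i), sum_fin_two_arrow] at key

lemma SSIq.abs_correlationGap_fin_le (h : SSIq ε 2 T N V w v) {k₁ k₂ : ℕ}
    {N₁ : (Fin N → Bool) → ι → Matrix (Fin k₁) (Fin k₁) ℂ}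
    {N₂ : (Fin N → Bool) → ι → Matrix (Fin k₂) (Fin k₂) ℂ}
    (h₁ : IsImplementable (fun i => copies (Fin T) (v i)) N₁)
    (h₂ : IsImplementable (fun i => copies (Fin T) (v i)) N₂)
    {ρ : Matrix (Fin k₁ × Fin k₂) (Fin k₁ × Fin k₂) ℂ} (hρ : IsDensity ρ)
    (S : Finset ((Fin N → Bool) × (Fin N → Bool))) :
    |correlationGap w (pairAcceptProb N₁ N₂ ρ S)| ≤ ε := by
  obtain ⟨M₁, hM₁, hN₁⟩ := h₁
  obtain ⟨M₂, hM₂, hN₂⟩ := h₂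
  let k : Fin 2 → ℕ := ![k₁, k₂]
  let M : (j : Fin 2) → (Fin N → Bool) →
      Matrix (Fin (k j) × (Fin T → Fin V)) (Fin (k j) × (Fin T → Fin V)) ℂ
    | 0 => M₁
    | 1 => M₂
  have hM : ∀ j, IsPOVM (M j) := Fin.forall_fin_two.mpr ⟨hM₁, hM₂⟩
  rw [show N₁ = _ from funext₂ hN₁, show N₂ = _ from funext₂ hN₂]
  exact h.abs_correlationGap_compress_le hM hρ S

variable {E₁ E₂ O₁ O₂ T₁ T₂ : Type*} [Fintype E₁] [DecidableEq E₁] [Fintype E₂] [DecidableEq E₂]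
  [Fintype O₁] [Fintype O₂] [Fintype T₁] [DecidableEq T₁] [Fintype T₂] [DecidableEq T₂]
  {N₁ : O₁ → ι → Matrix E₁ E₁ ℂ} {N₂ : O₂ → ι → Matrix E₂ E₂ ℂ}

lemma SSIq.abs_correlationGap_density_le (h : SSIq ε 2 T N V w v)
    (hv : ∀ i, star (v i) ⬝ᵥ v i = 1)
    (h₁ : IsImplementable (fun i => copies T₁ (v i)) N₁)
    (h₂ : IsImplementable (fun i => copies T₂ (v i)) N₂)
    (hT₁ : Fintype.card T₁ ≤ T) (hT₂ : Fintype.card T₂ ≤ T)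
    (g₁ : O₁ ↪ (Fin N → Bool)) (g₂ : O₂ ↪ (Fin N → Bool))
    {ρ : Matrix (E₁ × E₂) (E₁ × E₂) ℂ} (hρ : IsDensity ρ) (S : Finset (O₁ × O₂)) :
    |correlationGap w (pairAcceptProb N₁ N₂ ρ S)| ≤ ε := by
  let e₁ := (Fintype.equivFin E₁).symm
  let e₂ := (Fintype.equivFin E₂).symm
  have h₁' := ((h₁.copies_mono hv (T' := Fin T) (by simpa)).extend g₁).submatrix e₁ (.refl _)
  have h₂' := ((h₂.copies_mono hv (T' := Fin T) (by simpa)).extend g₂).submatrix e₂ (.refl _)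
  rw [← pairAcceptProb_extend N₁ N₂ ρ S g₁ g₂, ← pairAcceptProb_submatrix _ _ _ _ e₁ e₂]
  exact h.abs_correlationGap_fin_le h₁' h₂'
    ⟨hρ.1.submatrix _, (trace_submatrix_equiv _ ρ).trans hρ.2⟩ _

lemma SSIq.abs_correlationGap_le (h : SSIq ε 2 T N V w v)
    (hv : ∀ i, star (v i) ⬝ᵥ v i = 1)
    (h₁ : IsImplementable (fun i => copies T₁ (v i)) N₁)
    (h₂ : IsImplementable (fun i => copies T₂ (v i)) N₂)
    (hT₁ : Fintype.card T₁ ≤ T) (hT₂ : Fintype.card T₂ ≤ T)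
    (g₁ : O₁ ↪ (Fin N → Bool)) (g₂ : O₂ ↪ (Fin N → Bool))
    {ρ : Matrix (E₁ × E₂) (E₁ × E₂) ℂ} (hρ : ρ.PosSemidef) (S : Finset (O₁ × O₂)) :
    |correlationGap w (pairAcceptProb N₁ N₂ ρ S)| ≤ ε * ρ.trace.re := by
  obtain ⟨c, hc, hρc : (c : ℂ) = ρ.trace⟩ := RCLike.nonneg_iff_exists_ofReal.mp hρ.trace_nonneg
  rw [← hρc, Complex.ofReal_re]
  rcases hc.eq_or_lt with rfl | hc
  · have : ρ = 0 := hρ.trace_eq_zero_iff.mp (by simpa using hρc.symm)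
    simp [this, correlationGap, pairAcceptProb]
  · have hσ : IsDensity (((c⁻¹ : ℝ) : ℂ) • ρ) := by
      refine ⟨hρ.smul (Complex.zero_le_real.mpr (inv_nonneg.mpr hc.le)), ?_⟩
      rw [trace_smul, ← hρc]
      simp [hc.ne']
    have normalized := h.abs_correlationGap_density_le hv h₁ h₂ hT₁ hT₂ g₁ g₂ hσ S
    rw [funext₂ (pairAcceptProb_smul N₁ N₂ ρ S c⁻¹), correlationGap_const_mul, abs_mul,
      abs_of_pos (inv_pos.mpr hc), inv_mul_le_iff₀ hc] at normalized
    rwa [mul_comm]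

end SharedPair

/-- `σ` is the unnormalised state of the first register after outcome `Q` on the second. -/
lemma exists_posSemidef_conditional_state {E F : Type*} [Fintype E] [Fintype F]
    {ρ : Matrix (E × F) (E × F) ℂ} (hρ : ρ.PosSemidef) {Q : Matrix F F ℂ} (hQ : Q.PosSemidef) :
    ∃ σ : Matrix E E ℂ, σ.PosSemidef ∧
      ∀ X : Matrix E E ℂ, ((X ⊗ₖ Q) * ρ).trace = (X * σ).trace := by
  obtain ⟨κ, rfl⟩ := exists_eq_conjTranspose_mul_self hQ
  refine ⟨∑ f, compress (star (κ f)) ρ,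
    posSemidef_sum _ fun f _ => posSemidef_compress _ hρ, fun X => ?_⟩
  simp only [trace, diag_apply, mul_apply, kroneckerMap_apply, Fintype.sum_prod_type,
    conjTranspose_apply, Matrix.sum_apply, compress, of_apply, Finset.mul_sum, Finset.sum_mul,
    Pi.star_apply, star_star]
  refine Finset.sum_congr rfl fun e _ => ?_
  rw [Finset.sum_comm]
  conv_rhs => rw [Finset.sum_comm]
  refine Finset.sum_congr rfl fun e' _ => ?_
  rw [Finset.sum_comm_cycle]
  refine Finset.sum_congr rfl fun g _ => ?_
  rw [Finset.sum_comm]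
  exact Finset.sum_congr rfl fun f' _ => Finset.sum_congr rfl fun f _ => by ring

lemma kronecker_sum {R l m n p O : Type*} [NonUnitalNonAssocSemiring R] (X : Matrix l m R)
    (s : Finset O) (Q : O → Matrix n p R) : X ⊗ₖ (∑ o ∈ s, Q o) = ∑ o ∈ s, X ⊗ₖ Q o := by
  ext
  simp [Matrix.sum_apply, Finset.mul_sum]

lemma SSIq.abs_correlationGap_spectator_le {V T N : ℕ} {ι : Type*} [Fintype ι] {w : ι → ℝ}
    {v : ι → Fin V → ℂ} {ε : ℝ} (h : SSIq ε 2 T N V w v) (hv : ∀ i, star (v i) ⬝ᵥ v i = 1)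
    {E₁ E₂ F O₁ O₂ O₃ T₁ T₂ : Type*} [Fintype E₁] [DecidableEq E₁] [Fintype E₂] [DecidableEq E₂]
    [Fintype F] [DecidableEq F] [Fintype O₁] [Fintype O₂] [Fintype O₃]
    [Fintype T₁] [DecidableEq T₁] [Fintype T₂] [DecidableEq T₂]
    {N₁ : O₁ → ι → Matrix E₁ E₁ ℂ} {N₂ : O₂ → ι → Matrix E₂ E₂ ℂ} {Q : O₃ → Matrix F F ℂ}
    (h₁ : IsImplementable (fun i => copies T₁ (v i)) N₁)
    (h₂ : IsImplementable (fun i => copies T₂ (v i)) N₂) (hQ : IsPOVM Q)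
    (hT₁ : Fintype.card T₁ ≤ T) (hT₂ : Fintype.card T₂ ≤ T)
    (g₁ : O₁ ↪ (Fin N → Bool)) (g₂ : O₂ ↪ (Fin N → Bool))
    {ρ : Matrix ((E₁ × E₂) × F) ((E₁ × E₂) × F) ℂ} (hρ : ρ.PosSemidef)
    (S : Finset ((O₁ × O₂) × O₃)) :
    |correlationGap w fun i i' =>
      ∑ o ∈ S, (((N₁ o.1.1 i ⊗ₖ N₂ o.1.2 i') ⊗ₖ Q o.2) * ρ).trace.re| ≤ ε * ρ.trace.re := by
  classical
  choose σ hσ trace_σ using fun o => exists_posSemidef_conditional_state hρ (hQ.1 o)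
  let S₁₂ (o₃ : O₃) : Finset (O₁ × O₂) := {o | (o, o₃) ∈ S}
  have condition (i i' : ι) :
      ∑ o ∈ S, (((N₁ o.1.1 i ⊗ₖ N₂ o.1.2 i') ⊗ₖ Q o.2) * ρ).trace.re =
        ∑ o₃, pairAcceptProb N₁ N₂ (σ o₃) (S₁₂ o₃) i i' := by
    simp only [trace_σ, pairAcceptProb]
    exact Finset.sum_finset_product_right S _ S₁₂ fun p => by simp [S₁₂]
  have sum_trace : ∑ o₃, (σ o₃).trace = ρ.trace := by
    have (o₃ : O₃) : (σ o₃).trace = (((1 : Matrix (E₁ × E₂) (E₁ × E₂) ℂ) ⊗ₖ Q o₃) * ρ).trace := by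
      rw [trace_σ, one_mul]
    rw [Fintype.sum_congr _ _ this, ← trace_sum, ← Finset.sum_mul, ← kronecker_sum, hQ.2,
      one_kronecker_one, one_mul]
  simp only [condition, correlationGap_sum]
  calc _ ≤ ∑ o₃, |correlationGap w (pairAcceptProb N₁ N₂ (σ o₃) (S₁₂ o₃))| :=
        Finset.abs_sum_le_sum_abs _ _
    _ ≤ ∑ o₃, ε * (σ o₃).trace.re := Finset.sum_le_sum fun o₃ _ =>
        h.abs_correlationGap_le hv h₁ h₂ hT₁ hT₂ g₁ g₂ (hσ o₃) (S₁₂ o₃)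
    _ = ε * ρ.trace.re := by rw [← Finset.mul_sum, ← Complex.re_sum, sum_trace]

section Tripartition

variable {J : Type*} (p r : J → Prop) [DecidablePred p] [DecidablePred r]

/-- Splits a family into its restrictions to the indices satisfying `p`, to those satisfying `r`
but not `p`, and to the remaining ones. -/
def tripartition (E : J → Type*) :
    (∀ j, E j) ≃ ((∀ j : {j // p j}, E j) × (∀ j : {j : {j // ¬p j} // r j}, E j)) ×
      (∀ j : {j : {j // ¬p j} // ¬r j}, E j) :=
  (Equiv.piEquivPiSubtypeProd p E).trans <|
    ((Equiv.refl _).prodCongr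
      (Equiv.piEquivPiSubtypeProd (fun j : {j // ¬p j} => r j) fun j => E j)).trans
        (Equiv.prodAssoc _ _ _).symm

variable [Fintype J] {ι : Type*} {E O : J → Type*}

lemma piKronecker_eq_submatrix_tripartition {R : Type*} [CommSemiring R]
    (X : ∀ j, Matrix (E j) (E j) R) :
    piKronecker X =
      ((piKronecker (fun j : {j // p j} => X j) ⊗ₖ
        piKronecker fun j : {j : {j // ¬p j} // r j} => X j) ⊗ₖ
          piKronecker fun j : {j : {j // ¬p j} // ¬r j} => X j).submatrix
        (tripartition p r E) (tripartition p r E) := by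
  rw [piKronecker_eq_submatrix_kronecker p,
    piKronecker_eq_submatrix_kronecker fun j : {j // ¬p j} => r j]
  ext e e'
  simp only [submatrix_apply, kroneckerMap_apply, ← mul_assoc]
  rfl

lemma acceptProb_tripartition [DecidableEq J] [∀ j, Fintype (E j)]
    (X : ∀ j, O j → ι → Matrix (E j) (E j) ℂ)
    (ρ : Matrix (∀ j, E j) (∀ j, E j) ℂ) (S : Finset (∀ j, O j)) (s : J → ι) (i i' : ι) :
    acceptProb X ρ S (fun j => if p j then i else if r j then i' else s j) =
      ∑ o ∈ S.map (tripartition p r O).toEmbedding,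
        (((piKronecker (fun j : {j // p j} => X j (o.1.1 j) i) ⊗ₖ
          piKronecker fun j : {j : {j // ¬p j} // r j} => X j (o.1.2 j) i') ⊗ₖ
            piKronecker fun j : {j : {j // ¬p j} // ¬r j} => X j (o.2 j) (s j)) *
          ρ.submatrix (tripartition p r E).symm (tripartition p r E).symm).trace.re := by
  rw [acceptProb, Finset.sum_map]
  refine Finset.sum_congr rfl fun o _ => ?_
  rw [← trace_submatrix_equiv_mul (tripartition p r E).symm,
    piKronecker_eq_submatrix_tripartition p r]
  have on_p (j : {j // p j}) : (if p j then i else if r j then i' else s j) = i := if_pos j.2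
  have on_r (j : {j : {j // ¬p j} // r j}) :
      (if p j then i else if r j then i' else s j) = i' := by rw [if_neg j.1.2, if_pos j.2]
  have elsewhere (j : {j : {j // ¬p j} // ¬r j}) :
      (if p j then i else if r j then i' else s j) = s j := by rw [if_neg j.1.2, if_neg j.2]
  simp only [on_p, on_r, elsewhere, submatrix_submatrix, Equiv.self_comp_symm, submatrix_id_id]
  rfl

end Tripartition

section Amplification

variable {V b t n : ℕ} {ι : Type*} [Fintype ι] {w : ι → ℝ} {v : ι → Fin V → ℂ} {ε : ℝ}

lemma nonempty_embedding_bool_arrow {A : Type*} [Fintype A] (hA : Fintype.card A ≤ b) :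
    Nonempty ((A → Fin n → Bool) ↪ (Fin (b * n) → Bool)) := by
  classical
  refine Function.Embedding.nonempty_of_card_le ?_
  simp only [Fintype.card_fun, Fintype.card_bool, Fintype.card_fin, ← pow_mul, mul_comm n]
  exact Nat.pow_le_pow_right two_pos (Nat.mul_le_mul_right n hA)

lemma SSIq.abs_correlationGap_acceptProb_le (h : SSIq ε 2 (b * t) (b * n) V w v)
    (hv : ∀ i, star (v i) ⬝ᵥ v i = 1) {J : Type*} [Fintype J] [DecidableEq J] {E : J → Type*}
    [∀ j, Fintype (E j)] [∀ j, DecidableEq (E j)]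
    {X : ∀ j, (Fin n → Bool) → ι → Matrix (E j) (E j) ℂ}
    (hX : ∀ j, IsImplementable (fun i => copies (Fin t) (v i)) (X j))
    {ρ : Matrix (∀ j, E j) (∀ j, E j) ℂ} (hρ : IsDensity ρ) (S : Finset (J → Fin n → Bool))
    {p r : J → Prop} [DecidablePred p] [DecidablePred r] (hp : Fintype.card {j // p j} ≤ b)
    (hr : Fintype.card {j : {j // ¬p j} // r j} ≤ b) (s : J → ι) :
    |correlationGap w fun i i' =>
      acceptProb X ρ S fun j => if p j then i else if r j then i' else s j| ≤ ε := by
  obtain ⟨g₁⟩ := nonempty_embedding_bool_arrow (n := n) hp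
  obtain ⟨g₂⟩ := nonempty_embedding_bool_arrow (n := n) hr
  have hQ := IsPOVM.pi fun j : {j : {j // ¬p j} // ¬r j} =>
    (hX j).isPOVM (star_copies_dotProduct_copies (hv (s j)))
  have spectator := h.abs_correlationGap_spectator_le hv
    (.pi_copies fun j : {j // p j} => hX j) (.pi_copies fun j : {j : {j // ¬p j} // r j} => hX j)
    hQ (by simpa using Nat.mul_le_mul_right t hp) (by simpa using Nat.mul_le_mul_right t hr)
    g₁ g₂ (hρ.1.submatrix (tripartition p r E).symm)
    (S.map (tripartition p r fun _ => Fin n → Bool).toEmbedding)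
  rw [trace_submatrix_equiv, hρ.2, Complex.one_re, mul_one] at spectator
  simpa only [acceptProb_tripartition] using spectator

lemma SSIq.blockwiseClose_acceptProb (h : SSIq ε 2 (b * t) (b * n) V w v)
    (hv : ∀ i, star (v i) ⬝ᵥ v i = 1) {J : Type*} [Fintype J] [DecidableEq J] {E : J → Type*}
    [∀ j, Fintype (E j)] [∀ j, DecidableEq (E j)]
    {X : ∀ j, (Fin n → Bool) → ι → Matrix (E j) (E j) ℂ}
    (hX : ∀ j, IsImplementable (fun i => copies (Fin t) (v i)) (X j))
    {ρ : Matrix (∀ j, E j) (∀ j, E j) ℂ} (hρ : IsDensity ρ) (S : Finset (J → Fin n → Bool)) :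
    BlockwiseClose w b ε (acceptProb X ρ S) := by
  intro A B hA hB s
  have card_A : Fintype.card {j // j ∈ A} ≤ b := by rwa [Fintype.card_coe]
  let inB (j : {j : {j // j ∉ A} // ↑j ∈ B}) : {j // j ∈ B} := ⟨j, j.2⟩
  have inB_injective : inB.Injective := fun j j' hj => by simpa [inB, Subtype.ext_iff] using hj
  have card_B : Fintype.card {j : {j // j ∉ A} // ↑j ∈ B} ≤ b :=
    (Fintype.card_le_of_injective inB inB_injective).trans (by rwa [Fintype.card_coe])
  exact h.abs_correlationGap_acceptProb_le hv hX hρ S (p := (· ∈ A)) (r := (· ∈ B))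
    (by convert card_A) card_B s

theorem SSIq.amplify (h : SSIq ε 2 (b * t) (b * n) V w v) (hw0 : ∀ i, 0 ≤ w i)
    (hw1 : ∑ i, w i = 1) (hv : ∀ i, ∑ a, ‖v i a‖ ^ 2 = 1) {q : ℕ} (hq : 0 < q) (hqb : q ≤ 2 * b) :
    SSIq ((q - 1 : ℝ) * ε) q t n V w v := by
  intro k ρ M hρ hM S
  have unit_norm (i : ι) : star (v i) ⬝ᵥ v i = 1 := by
    rw [← Complex.ofReal_one, ← hv i]
    simp [dotProduct, Complex.conj_mul']
  have : Nonempty (Fin q) := ⟨⟨0, hq⟩⟩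
  have close := h.blockwiseClose_acceptProb unit_norm
    (X := fun j o i => compress (copies (Fin t) (v i)) (M j o))
    (fun j => ⟨M j, hM j, fun _ _ => rfl⟩) hρ S
  have key := close.abs_shared_sub_independent_le hw0 hw1 (by simpa)
  rwa [← sum_qProb_sub_qProb, Fintype.card_fin, Nat.cast_sub hq, Nat.cast_one] at key

end Amplification

/-- Monotone many-party amplification of SSI: (ε, D^{2^r t}, 2^r n)-SSI against 2
parties implies, for all j ≤ r, ((2^{j+1}−1)ε, D^{2^{r−j} t}, 2^{r−j} n)-SSI
against 2^{j+1} parties; consequently (ε, D^{qt}, qn)-SSI against 2 parties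
implies (2qε, D^t, n)-SSI against q parties. -/
theorem ssi_many_party_amplification (V : ℕ) {ι : Type*} [Fintype ι]
    (w : ι → ℝ) (hw0 : ∀ i, 0 ≤ w i) (hw1 : ∑ i, w i = 1)
    (v : ι → Fin V → ℂ) (hv : ∀ i, ∑ a, ‖v i a‖ ^ 2 = 1) (ε : ℝ) (hε : 0 ≤ ε) :
    (∀ (r t n : ℕ), SSIq ε 2 (2 ^ r * t) (2 ^ r * n) V w v →
      ∀ j ≤ r, SSIq (((2 : ℝ) ^ (j + 1) - 1) * ε) (2 ^ (j + 1))
        (2 ^ (r - j) * t) (2 ^ (r - j) * n) V w v) ∧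
    (∀ (q t n : ℕ), 0 < q → SSIq ε 2 (q * t) (q * n) V w v →
      SSIq (2 * (q : ℝ) * ε) q t n V w v) := by
  constructor
  · intro r t n h j hj
    have hpow (m : ℕ) : 2 ^ j * (2 ^ (r - j) * m) = 2 ^ r * m := by
      rw [← mul_assoc, ← pow_add, Nat.add_sub_cancel' hj]
    rw [← hpow t, ← hpow n] at h
    simpa using h.amplify hw0 hw1 hv (q := 2 ^ (j + 1)) (by positivity) (pow_succ' 2 j).le
  · intro q t n hq h k ρ M hρ hM S
    calc _ ≤ ((q : ℝ) - 1) * ε := h.amplify hw0 hw1 hv hq (by lia) k ρ M hρ hM S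
      _ ≤ 2 * q * ε := by
        gcongr
        linarith [(Nat.cast_nonneg q : (0 : ℝ) ≤ q)]
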